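/- In every non-idempotent Kleene algebra, the loop-unrolling Horn clause holds: for all elements m0, m1, p, if m1·m1 = m1 and m1·m0 = 0, then (m0·p)*·m1 = (m0·p·(m0·p + m1))*·m1. (This validates the compiler-optimization rule that a quantum while-loop guarded by a projective measurement equals its once-unrolled version.) -/

import Mathlib

/-!
Write `a = m₀ p`, `m = m₁`, `b = a a` and `c = a m`, so that the unrolled loop is `(b + c)⋆ m`.
Both sides equal `(a a)⋆ (m + a m)`. For the left side this is the identity
`a⋆ = (a a)⋆ (1 + a)`, which splits iterations by parity. For the right side, `m a = 0` gives
`c b = 0` and `c c = 0`: once the summand `c` is chosen the unrolled loop must exit, so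
`(b + c)⋆ m` runs `b` some number of times, then `c` at most once. Each inequality is an instance
of an induction law applied to a fixed-point equation.
-/

/-- A non-idempotent Kleene algebra (NKA): a (not necessarily additively
idempotent) semiring equipped with a partial order preserved by `+` and `*`,
and a star operation satisfying `1 + p * p⋆ ≤ p⋆` and the two induction laws. -/
class NKA (K : Type*) extends Semiring K, PartialOrder K where
  star : K → K
  add_le_add' : ∀ {p q r s : K}, p ≤ q → r ≤ s → p + r ≤ q + s
  mul_le_mul' : ∀ {p q r s : K}, p ≤ q → r ≤ s → p * r ≤ q * s
  one_add_mul_star_le : ∀ p : K, 1 + p * star p ≤ star p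
  star_ind_left : ∀ {p q r : K}, q + p * r ≤ r → star p * q ≤ r
  star_ind_right : ∀ {p q r : K}, q + r * p ≤ r → q * star p ≤ r

postfix:max "⋆" => NKA.star

namespace NKA

variable {K : Type*} [NKA K]

/-- The axiom `1 + p p⋆ ≤ p⋆` is an equality, `p⋆` being the least pre-fixed point. -/
theorem star_unfold_left (p : K) : 1 + p * p⋆ = p⋆ := by
  refine le_antisymm (one_add_mul_star_le p) ?_
  have h : (1 : K) + p * (1 + p * p⋆) ≤ 1 + p * p⋆ :=
    add_le_add' le_rfl (mul_le_mul' le_rfl (one_add_mul_star_le p))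
  simpa using star_ind_left h

theorem star_unfold_right (p : K) : 1 + p⋆ * p = p⋆ := by
  have hu := star_unfold_left p
  apply le_antisymm
  · have h : p⋆ * p ≤ p * p⋆ := by
      apply star_ind_left
      calc p + p * (p * p⋆) = p * (1 + p * p⋆) := by rw [mul_add, mul_one]
        _ ≤ p * p⋆ := by rw [hu]
    calc 1 + p⋆ * p ≤ 1 + p * p⋆ := add_le_add' le_rfl h
      _ = p⋆ := hu
  · have h : 1 + p * (1 + p⋆ * p) ≤ 1 + p⋆ * p := by
      apply le_of_eq
      calc 1 + p * (1 + p⋆ * p) = 1 + (1 + p * p⋆) * p := by noncomm_ring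
        _ = 1 + p⋆ * p := by rw [hu]
    simpa using star_ind_left h

/-- Iterations of `a` split into an even number of them followed by at most one more. -/
theorem star_eq_star_sq_mul (a : K) : a⋆ = (a * a)⋆ * (1 + a) := by
  apply le_antisymm
  · have h : 1 + (a * a)⋆ * (1 + a) * a ≤ (a * a)⋆ * (1 + a) := by
      apply le_of_eq
      calc 1 + (a * a)⋆ * (1 + a) * a
          = (1 + (a * a)⋆ * (a * a)) + (a * a)⋆ * a := by noncomm_ring
        _ = (a * a)⋆ + (a * a)⋆ * a := by rw [star_unfold_right]
        _ = (a * a)⋆ * (1 + a) := by noncomm_ring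
    simpa using star_ind_right h
  · apply star_ind_left
    apply le_of_eq
    calc 1 + a + a * a * a⋆ = 1 + a * (1 + a * a⋆) := by noncomm_ring
      _ = a⋆ := by rw [star_unfold_left, star_unfold_left]

/-- If nothing can follow `c` except the exit `m`, a loop over `b + c` runs `b` repeatedly and
then `c` at most once. -/
theorem star_add_mul_of_terminal {b c m : K} (hcb : c * b = 0) (hcc : c * c = 0)
    (hcm : c * m = c) : (b + c)⋆ * m = b⋆ * (m + c) := by
  apply le_antisymm
  · apply star_ind_left
    apply le_of_eq
    have hcs : c * b⋆ = c := by
      rw [← star_unfold_left b, mul_add, ← mul_assoc, hcb, zero_mul, mul_one, add_zero]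
    calc m + (b + c) * (b⋆ * (m + c))
        = m + (b * b⋆ * (m + c) + c * b⋆ * (m + c)) := by noncomm_ring
      _ = m + (b * b⋆ * (m + c) + c) := by rw [hcs, mul_add c, hcm, hcc, add_zero]
      _ = (1 + b * b⋆) * (m + c) := by rw [add_mul, one_mul]; abel
      _ = b⋆ * (m + c) := by rw [star_unfold_left]
  · apply star_ind_left
    apply le_of_eq
    have hs : m + (b + c) * ((b + c)⋆ * m) = (b + c)⋆ * m := by
      conv_rhs => rw [← star_unfold_left (b + c)]
      rw [add_mul 1, one_mul, mul_assoc]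
    generalize (b + c)⋆ * m = s at hs ⊢
    have hcs : c * s = c := by
      rw [← hs, mul_add, hcm, ← mul_assoc, mul_add, hcb, hcc, add_zero, zero_mul, add_zero]
    calc m + c + b * s = m + (b + c) * s := by rw [add_mul, hcs]; abel
      _ = s := hs

end NKA

/-- Loop-unrolling Horn clause: a quantum while-loop guarded by a projective
measurement equals its once-unrolled version. -/
theorem nka_loop_unrolling {K : Type*} [NKA K] (m₀ m₁ p : K)
    (h₁ : m₁ * m₁ = m₁) (h₂ : m₁ * m₀ = 0) :
    (m₀ * p)⋆ * m₁ = (m₀ * p * (m₀ * p + m₁))⋆ * m₁ := by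
  have hma : m₁ * (m₀ * p) = 0 := by rw [← mul_assoc, h₂, zero_mul]
  generalize m₀ * p = a at hma ⊢
  have hca : a * m₁ * a = 0 := by rw [mul_assoc, hma, mul_zero]
  rw [mul_add, NKA.star_add_mul_of_terminal (b := a * a) (c := a * m₁)
    (by rw [← mul_assoc, hca, zero_mul]) (by rw [← mul_assoc, hca, zero_mul])
    (by rw [mul_assoc, h₁]), NKA.star_eq_star_sq_mul a, mul_assoc, add_mul, one_mul]
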